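/- arXiv:2106.02766 — 2 statements merged into one kernel-verified Lean document; each statement's English description precedes it below -/
import Mathlib

section
/- Guessing-game bound (Lemma 1 of the paper, in POVM form): Let p be a prime, n an even positive integer, and g : (ZMod p)^{n/2} × (ZMod p)^{n/2} → (ZMod p)^n a function such that for every z ∈ (ZMod p)^n, the number of pairs (y,y') with y ≠ y' and g(y,y') = z is at most 2. Let ρ_{XM} = (ρ^x)_{x∈(ZMod p)^n} be a c-q state on ℂ^{(ZMod p)^n} ⊗ ℂ^{S_M}, and suppose there exists a state σ_M on ℂ^{S_M} with ρ^x ≤ 2^{-k'} · σ_M (Löwner order) for all x (i.e., H_min(X|M) ≥ k'). Let P_Y be a probability distribution on (ZMod p)^{n/2}, independent of (X,M), with P_Y(y) ≤ 2^{-k} for all y (i.e., H_min(Y) ≥ k). For each y let (F^y_{(y',b)})_{y' ≠ y, b ∈ ZMod p} be a POVM on ℂ^{S_M}: each F^y_{(y',b)} is positive semidefinite and ∑_{y'≠y, b} F^y_{(y',b)} = I. Then the success probability P_succ = ∑_{x} ∑_{y} P_Y(y) ∑_{y' ≠ y} Tr(F^y_{(y', ⟨x, g(y,y')⟩)} ·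 ρ^x), where ⟨x,z⟩ = ∑_{i=1}^n x_i·z_i in ZMod p, satisfies P_succ ≤ 1/p + √(2 · p^{n+1} · 2^{−(k+k')}). -/
open scoped BigOperators ComplexOrder
open Matrix Finset

/-- Löwner order: `A ≤ B` iff `B - A` is positive semidefinite. -/
def Loewner {n : Type*} [Fintype n] (A B : Matrix n n ℂ) : Prop := (B - A).PosSemidef

/-!
Centring Bob's POVMs in the guess `b` turns his advantage over a uniformly random guess into
`∑ x, tr (G x * ρ x)`, where `G x` is his winning operator for `x` minus `1 / |K|`. By
Cauchy-Schwarz and `ρ x ≤ 2 ^ (-k') • σ`, it suffices to bound the second moment of `G` in the norm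
`‖A‖ ^ 2 = tr (A * σ * Aᴴ)`.

Now `G x` is a sum of terms `f (φ x)` with `φ` a linear form and `f : K → Matrix S S ℂ` of mean
zero. Two such terms whose forms have different kernels are orthogonal after summation over `x`,
because a translation in the kernel of one form equidistributes the values of the other. Nonzero
forms with the same kernel are proportional, so each such class has at most `m * |K|` members, and
this loss of a factor `|K|` is made up for by the equidistribution of the values `φ x`; the zero
form has only `m` members in its class. What remains is
`m * |V| * ∑ y, P y ^ 2` times `∑ i, tr (E i * σ * E i)` for a POVM `E`, which is at most `tr σ`
since `E i * E i ≤ E i`.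
-/

section InnerProductSpace

variable (𝕜 : Type*) {E : Type*} [RCLike 𝕜] [SeminormedAddCommGroup E] [InnerProductSpace 𝕜 E]

theorem sum_norm_sq_sum_le_sum_card_mul {α X : Type*} [Fintype X] (s : Finset α)
    {r : α → α → Prop} [DecidableRel r] [Std.Symm r] (v : α → X → E)
    (hv : ∀ i ∈ s, ∀ j ∈ s, ¬ r i j → ∑ x, inner 𝕜 (v i x) (v j x) = 0) :
    ∑ x, ‖∑ i ∈ s, v i x‖ ^ 2 ≤ ∑ i ∈ s, #{j ∈ s | r i j} * ∑ x, ‖v i x‖ ^ 2 := by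
  set T : α → ℝ := fun i => ∑ x, ‖v i x‖ ^ 2 with hT
  have hpair (i j : α) : RCLike.re (∑ x, inner 𝕜 (v i x) (v j x)) ≤ (T i + T j) / 2 := by
    rw [map_sum, hT, ← sum_add_distrib, sum_div]
    gcongr with x
    have := re_inner_le_norm (𝕜 := 𝕜) (v i x) (v j x)
    linarith [two_mul_le_add_sq ‖v i x‖ ‖v j x‖]
  have hswap : ∑ i ∈ s, ∑ j ∈ s with r i j, T j = ∑ i ∈ s, ∑ j ∈ s with r i j, T i :=
    sum_comm' fun i j => by
      simp only [mem_filter]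
      exact ⟨fun h => ⟨⟨h.1, symm h.2.2⟩, h.2.1⟩, fun h => ⟨h.1.1, h.2, symm h.1.2⟩⟩
  calc ∑ x, ‖∑ i ∈ s, v i x‖ ^ 2
      = ∑ i ∈ s, ∑ j ∈ s, RCLike.re (∑ x, inner 𝕜 (v i x) (v j x)) := by
        simp_rw [← inner_self_eq_norm_sq (𝕜 := 𝕜), sum_inner, inner_sum, map_sum]
        rw [sum_comm]
        exact sum_congr rfl fun i _ => sum_comm
    _ = ∑ i ∈ s, ∑ j ∈ s with r i j, RCLike.re (∑ x, inner 𝕜 (v i x) (v j x)) := by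
        refine sum_congr rfl fun i hi => (sum_filter_of_ne fun j hj hne => ?_).symm
        contrapose! hne
        rw [hv i hi j hj hne, map_zero]
    _ ≤ ∑ i ∈ s, ∑ j ∈ s with r i j, (T i + T j) / 2 := by gcongr; exact hpair _ _
    _ = ∑ i ∈ s, ∑ j ∈ s with r i j, T i := by
        simp_rw [← sum_div, sum_add_distrib, hswap, add_self_div_two]
    _ = ∑ i ∈ s, #{j ∈ s | r i j} * T i := by simp_rw [sum_const, nsmul_eq_mul]

include 𝕜 in
theorem sum_norm_sq_balance_le {β : Type*} [Fintype β] [Module ℚ≥0 E] (f : β → E) :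
    ∑ b, ‖Fintype.balance f b‖ ^ 2 ≤ ∑ b, ‖f b‖ ^ 2 := by
  set μ : E := 𝔼 b, f b
  have hexpand (b : β) : ‖f b‖ ^ 2 = ‖Fintype.balance f b‖ ^ 2 +
      2 * RCLike.re (inner 𝕜 (Fintype.balance f b) μ) + ‖μ‖ ^ 2 := by
    rw [← norm_add_sq, Fintype.balance_apply, sub_add_cancel]
  have hcross : ∑ b, RCLike.re (inner 𝕜 (Fintype.balance f b) μ) = 0 := by
    rw [← map_sum, ← sum_inner, Fintype.sum_balance, inner_zero_left, map_zero]
  simp_rw [hexpand, sum_add_distrib, ← mul_sum, hcross, mul_zero, add_zero]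
  exact le_add_of_nonneg_right (by positivity)

end InnerProductSpace

section LinearForms

variable {K V : Type*} [Field K] [AddCommGroup V] [Module K V]

theorem exists_eq_smul_of_ker_le {φ ψ : Module.Dual K V}
    (h : LinearMap.ker φ ≤ LinearMap.ker ψ) : ∃ c : K, ψ = c • φ := by
  have hmem := mem_span_of_iInf_ker_le_ker (L := fun _ : Unit => φ) (K := ψ) (by simpa using h)
  rw [Set.range_const, Submodule.mem_span_singleton] at hmem
  exact hmem.imp fun _ => Eq.symm

variable [Fintype K]

theorem card_filter_ker_eq_le [DecidableEq (Submodule K V)] [DecidableEq (Module.Dual K V)]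
    {α : Type*} {J : Finset α} {ℓ : α → Module.Dual K V} {m : ℕ}
    (hm : ∀ φ, #{j ∈ J | ℓ j = φ} ≤ m) (φ : Module.Dual K V) :
    #{j ∈ J | LinearMap.ker φ = LinearMap.ker (ℓ j)} ≤ m * Fintype.card K := by
  have hmaps : ∀ j ∈ J.filter (fun j => LinearMap.ker φ = LinearMap.ker (ℓ j)),
      ℓ j ∈ univ.image fun c : K => c • φ := fun j hj => by
    obtain ⟨c, hc⟩ := exists_eq_smul_of_ker_le (mem_filter.mp hj).2.le
    exact mem_image.mpr ⟨c, mem_univ c, hc.symm⟩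
  calc #{j ∈ J | LinearMap.ker φ = LinearMap.ker (ℓ j)}
      ≤ m * #(univ.image fun c : K => c • φ) :=
        card_le_mul_card_image_of_maps_to hmaps m fun ψ _ =>
          (card_le_card (filter_subset_filter _ (filter_subset _ _))).trans (hm ψ)
    _ ≤ m * Fintype.card K := Nat.mul_le_mul_left m card_image_le

variable [Fintype V]

theorem card_nsmul_sum_apply_apply {M : Type*} [AddCommMonoid M] {φ ψ : Module.Dual K V}
    (h : ¬ LinearMap.ker φ ≤ LinearMap.ker ψ) (Φ : K → K → M) :
    Fintype.card K • ∑ x, Φ (φ x) (ψ x) = ∑ x, ∑ t, Φ (φ x) t := by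
  obtain ⟨w, hφ, hψ⟩ := SetLike.not_le_iff_exists.mp h
  rw [LinearMap.mem_ker] at hφ hψ
  calc Fintype.card K • ∑ x, Φ (φ x) (ψ x)
      = ∑ _t : K, ∑ x, Φ (φ x) (ψ x) := by rw [sum_const, card_univ]
    _ = ∑ t : K, ∑ x, Φ (φ x) (ψ x + t * ψ w) := by
        refine sum_congr rfl fun t _ => ?_
        rw [← Fintype.sum_equiv (Equiv.addRight (t • w)) _ _ fun _ => rfl]
        simp [hφ]
    _ = ∑ x, ∑ t : K, Φ (φ x) (ψ x + t * ψ w) := sum_comm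
    _ = ∑ x, ∑ t, Φ (φ x) t := sum_congr rfl fun x _ =>
        ((Equiv.mulRight₀ (ψ w) hψ).trans (Equiv.addLeft (ψ x))).sum_comp (Φ (φ x))

theorem card_filter_ker_eq_mul_sum_le [DecidableEq (Submodule K V)]
    [DecidableEq (Module.Dual K V)] {α : Type*} {J : Finset α} {ℓ : α → Module.Dual K V} {m : ℕ}
    (hm : ∀ φ, #{j ∈ J | ℓ j = φ} ≤ m) (φ : Module.Dual K V) {h : K → ℝ} (hh : ∀ b, 0 ≤ h b) :
    #{j ∈ J | LinearMap.ker φ = LinearMap.ker (ℓ j)} * ∑ x, h (φ x) ≤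
      m * Fintype.card V * ∑ b, h b := by
  rcases eq_or_ne φ 0 with rfl | hφ
  · have hzero : #{j ∈ J | LinearMap.ker (0 : Module.Dual K V) = LinearMap.ker (ℓ j)} ≤ m := by
      simpa only [LinearMap.ker_zero, eq_comm (a := (⊤ : Submodule K V)), LinearMap.ker_eq_top]
        using hm 0
    calc _ ≤ (m : ℝ) * (Fintype.card V * h 0) := by
          simp only [LinearMap.zero_apply, sum_const, card_univ, nsmul_eq_mul]
          gcongr
          exact mul_nonneg (Nat.cast_nonneg _) (hh 0)
      _ ≤ m * (Fintype.card V * ∑ b, h b) := by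
          gcongr
          exact single_le_sum (fun b _ => hh b) (mem_univ 0)
      _ = m * Fintype.card V * ∑ b, h b := (mul_assoc _ _ _).symm
  · have hequi : (Fintype.card K : ℝ) * ∑ x, h (φ x) = Fintype.card V * ∑ b, h b := by
      have hker : ¬ LinearMap.ker (0 : Module.Dual K V) ≤ LinearMap.ker φ := by
        rwa [LinearMap.ker_zero, top_le_iff, LinearMap.ker_eq_top]
      simpa using card_nsmul_sum_apply_apply hker fun _ => h
    calc _ ≤ ((m * Fintype.card K : ℕ) : ℝ) * ∑ x, h (φ x) :=
          mul_le_mul_of_nonneg_right (mod_cast card_filter_ker_eq_le hm φ)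
            (sum_nonneg fun x _ => hh _)
      _ = m * Fintype.card V * ∑ b, h b := by rw [Nat.cast_mul, mul_assoc, hequi, mul_assoc]

variable (𝕜 : Type*) {E : Type*} [RCLike 𝕜] [SeminormedAddCommGroup E] [InnerProductSpace 𝕜 E]

theorem sum_inner_eq_zero_of_ker_ne {φ ψ : Module.Dual K V}
    (hne : LinearMap.ker φ ≠ LinearMap.ker ψ) {f h : K → E} (hf : ∑ b, f b = 0)
    (hh : ∑ b, h b = 0) : ∑ x, inner 𝕜 (f (φ x)) (h (ψ x)) = 0 := by
  refine (smul_eq_zero.mp ?_).resolve_left (Fintype.card_ne_zero (α := K))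
  by_cases hle : LinearMap.ker φ ≤ LinearMap.ker ψ
  · rw [card_nsmul_sum_apply_apply (fun hge => hne (hle.antisymm hge))
      fun b a => inner 𝕜 (f a) (h b)]
    simp_rw [← sum_inner, hf, inner_zero_left, sum_const_zero]
  · rw [card_nsmul_sum_apply_apply hle fun a b => inner 𝕜 (f a) (h b)]
    simp_rw [← inner_sum, hh, inner_zero_right, sum_const_zero]

include 𝕜 in
theorem sum_norm_sq_sum_apply_le [DecidableEq (Module.Dual K V)] {α : Type*} {J : Finset α}
    {ℓ : α → Module.Dual K V} {m : ℕ} (hm : ∀ φ, #{j ∈ J | ℓ j = φ} ≤ m) {f : α → K → E}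
    (hf : ∀ j, ∑ b, f j b = 0) :
    ∑ x, ‖∑ j ∈ J, f j (ℓ j x)‖ ^ 2 ≤ m * Fintype.card V * ∑ j ∈ J, ∑ b, ‖f j b‖ ^ 2 := by
  classical
  have hsymm : Std.Symm fun i j => LinearMap.ker (ℓ i) = LinearMap.ker (ℓ j) :=
    ⟨fun _ _ => Eq.symm⟩
  calc ∑ x, ‖∑ j ∈ J, f j (ℓ j x)‖ ^ 2
      ≤ ∑ i ∈ J, #{j ∈ J | LinearMap.ker (ℓ i) = LinearMap.ker (ℓ j)} *
          ∑ x, ‖f i (ℓ i x)‖ ^ 2 :=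
        sum_norm_sq_sum_le_sum_card_mul 𝕜 J (fun j x => f j (ℓ j x))
          fun i _ j _ hij => sum_inner_eq_zero_of_ker_ne 𝕜 hij (hf i) (hf j)
    _ ≤ ∑ j ∈ J, m * Fintype.card V * ∑ b, ‖f j b‖ ^ 2 := sum_le_sum fun j _ =>
        card_filter_ker_eq_mul_sum_le hm (ℓ j) fun b => sq_nonneg ‖f j b‖
    _ = m * Fintype.card V * ∑ j ∈ J, ∑ b, ‖f j b‖ ^ 2 := (mul_sum _ _ _).symm

theorem sum_norm_sq_sum_smul_balance_le [DecidableEq (Module.Dual K V)] [Module ℚ≥0 E]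
    {α : Type*} {J : Finset α} {ℓ : α → Module.Dual K V} {m : ℕ}
    (hm : ∀ φ, #{j ∈ J | ℓ j = φ} ≤ m) (c : α → 𝕜) (f : α → K → E) :
    ∑ x, ‖∑ j ∈ J, c j • Fintype.balance (f j) (ℓ j x)‖ ^ 2 ≤
      m * Fintype.card V * ∑ j ∈ J, ‖c j‖ ^ 2 * ∑ b, ‖f j b‖ ^ 2 := by
  refine (sum_norm_sq_sum_apply_le 𝕜 (f := fun j b => c j • Fintype.balance (f j) b) hm
    fun j => by rw [← smul_sum, Fintype.sum_balance, smul_zero]).trans ?_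
  simp_rw [norm_smul, mul_pow, ← mul_sum]
  exact mul_le_mul_of_nonneg_left (sum_le_sum fun j _ =>
    mul_le_mul_of_nonneg_left (sum_norm_sq_balance_le 𝕜 (f j)) (sq_nonneg _)) (by positivity)

end LinearForms

section Matrices

variable {S : Type*} [Fintype S]

theorem Loewner.re_trace_mul_mul_conjTranspose_le {A B : Matrix S S ℂ} (h : Loewner A B)
    (G : Matrix S S ℂ) : (G * A * Gᴴ).trace.re ≤ (G * B * Gᴴ).trace.re := by
  have hdiff := (Complex.nonneg_iff.mp (h.mul_mul_conjTranspose_same G).trace_nonneg).1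
  rwa [Matrix.mul_sub, Matrix.sub_mul, trace_sub, Complex.sub_re, sub_nonneg] at hdiff

theorem norm_sq_eq_re_trace {σ : Matrix S S ℂ} (hσ : σ.PosSemidef) (A : Matrix S S ℂ) :
    letI := σ.toMatrixSeminormedAddCommGroup hσ
    ‖A‖ ^ 2 = (A * σ * Aᴴ).trace.re :=
  let _ := σ.toMatrixSeminormedAddCommGroup hσ
  let _ := σ.toMatrixInnerProductSpace hσ
  norm_sq_eq_re_inner (𝕜 := ℂ) A

theorem re_trace_mul_le_sqrt_mul_sqrt {σ : Matrix S S ℂ} (hσ : σ.PosSemidef)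
    (A : Matrix S S ℂ) : (A * σ).trace.re ≤ √σ.trace.re * √(A * σ * Aᴴ).trace.re := by
  classical
  let _ := σ.toMatrixSeminormedAddCommGroup hσ
  let _ := σ.toMatrixInnerProductSpace hσ
  have hinner : inner ℂ 1 A = (A * σ).trace := by
    change (A * σ * 1ᴴ).trace = _
    rw [conjTranspose_one, Matrix.mul_one]
  have hone : ‖(1 : Matrix S S ℂ)‖ = √σ.trace.re := by
    rw [← Real.sqrt_sq (norm_nonneg _), norm_sq_eq_re_trace hσ, conjTranspose_one, Matrix.one_mul,
      Matrix.mul_one]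
  rw [← hinner, ← hone, ← norm_sq_eq_re_trace hσ, Real.sqrt_sq (norm_nonneg _)]
  exact re_inner_le_norm (𝕜 := ℂ) 1 A

theorem sum_re_trace_mul_le_sqrt_mul_sqrt {X : Type*} [Fintype X] {ρ : X → Matrix S S ℂ}
    (hρ : ∀ x, (ρ x).PosSemidef) (A : X → Matrix S S ℂ) :
    ∑ x, (A x * ρ x).trace.re ≤
      √(∑ x, (ρ x).trace.re) * √(∑ x, (A x * ρ x * (A x)ᴴ).trace.re) :=
  (sum_le_sum fun x _ => re_trace_mul_le_sqrt_mul_sqrt (hρ x) (A x)).trans <|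
    Real.sum_sqrt_mul_sqrt_le univ
      (fun x => (Complex.nonneg_iff.mp (hρ x).trace_nonneg).1)
      fun x => (Complex.nonneg_iff.mp ((hρ x).mul_mul_conjTranspose_same (A x)).trace_nonneg).1

open scoped MatrixOrder in
theorem re_trace_mul_nonneg {A B : Matrix S S ℂ} (hA : A.PosSemidef) (hB : B.PosSemidef) :
    0 ≤ (A * B).trace.re := by
  classical
  obtain ⟨C, rfl⟩ := CStarAlgebra.nonneg_iff_eq_star_mul_self.mp hB.nonneg
  rw [← Matrix.mul_assoc, trace_mul_comm, ← Matrix.mul_assoc]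
  exact (Complex.nonneg_iff.mp (hA.mul_mul_conjTranspose_same C).trace_nonneg).1

variable [DecidableEq S]

open scoped MatrixOrder in
theorem posSemidef_sub_mul_self {E : Matrix S S ℂ} (hE : E.PosSemidef)
    (hE1 : (1 - E).PosSemidef) : (E - E * E).PosSemidef := by
  have hprod : 0 ≤ E * (1 - E) :=
    Commute.mul_nonneg hE.nonneg hE1.nonneg ((Commute.one_right E).sub_right (Commute.refl E))
  simpa only [Matrix.mul_sub, Matrix.mul_one] using hprod.posSemidef

open scoped MatrixOrder in
theorem sum_re_trace_mul_mul_conjTranspose_le {ι : Type*} {s : Finset ι} {E : ι → Matrix S S ℂ}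
    (hE : ∀ i ∈ s, (E i).PosSemidef) (hsum : ∑ i ∈ s, E i = 1) {σ : Matrix S S ℂ}
    (hσ : σ.PosSemidef) : ∑ i ∈ s, (E i * σ * (E i)ᴴ).trace.re ≤ σ.trace.re := by
  have hterm (i : ι) (hi : i ∈ s) : (E i * σ * (E i)ᴴ).trace.re ≤ (σ * E i).trace.re := by
    have hle : E i ≤ 1 := hsum ▸ single_le_sum (fun j hj => (hE j hj).nonneg) hi
    have hdiff := re_trace_mul_nonneg hσ (posSemidef_sub_mul_self (hE i hi) hle)
    rw [(hE i hi).isHermitian.eq, Matrix.mul_assoc, trace_mul_comm, Matrix.mul_assoc]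
    rwa [Matrix.mul_sub, trace_sub, Complex.sub_re, sub_nonneg] at hdiff
  calc ∑ i ∈ s, (E i * σ * (E i)ᴴ).trace.re ≤ ∑ i ∈ s, (σ * E i).trace.re := sum_le_sum hterm
    _ = σ.trace.re := by
        rw [← Complex.re_sum, ← trace_sum, ← Matrix.mul_sum, hsum, Matrix.mul_one]

end Matrices

section GuessingGame

variable {K V Y W S : Type*} [Field K] [AddCommGroup V] [Module K V] [Fintype V] [Fintype Y]
  [Fintype S]

/-- The probability of winning the game in which Bob, given `y` drawn from `P` and measuring the
quantum register with the POVM `F y`, answers with some `w ∈ R y` and a guess `b` for the value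
`g y w x`. The vector `x` and the register are in the classical-quantum state `ρ`. -/
noncomputable def successProb (P : Y → ℝ) (R : Y → Finset W) (g : Y → W → Module.Dual K V)
    (F : Y → W → K → Matrix S S ℂ) (ρ : V → Matrix S S ℂ) : ℝ :=
  ∑ x, ∑ y, P y * ∑ w ∈ R y, (F y w (g y w x) * ρ x).trace.re

/-- The operator measuring the advantage of Bob over a uniformly random guess on the input `x`: the
winning operator of `successProb`, with each `F y w` balanced in the guess `b`. -/
noncomputable def biasOperator [Fintype K] (P : Y → ℝ) (R : Y → Finset W)
    (g : Y → W → Module.Dual K V) (F : Y → W → K → Matrix S S ℂ) (x : V) : Matrix S S ℂ :=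
  ∑ y, ∑ w ∈ R y, (P y : ℂ) • Fintype.balance (F y w) (g y w x)

variable [Fintype K] [DecidableEq S] {P : Y → ℝ} {R : Y → Finset W} {g : Y → W → Module.Dual K V}
  {F : Y → W → K → Matrix S S ℂ}

omit [Fintype V] [Fintype S] in
theorem biasOperator_eq_sub (hP : ∑ y, P y = 1) (hFsum : ∀ y, ∑ w ∈ R y, ∑ b, F y w b = 1)
    (x : V) :
    biasOperator P R g F x =
      ∑ y, P y • ∑ w ∈ R y, F y w (g y w x) - (Fintype.card K : ℝ)⁻¹ • 1 := by
  have hmean (y : Y) : ∑ w ∈ R y, 𝔼 b, F y w b = (Fintype.card K : ℝ)⁻¹ • 1 := by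
    simp only [expect, card_univ, ← smul_sum, hFsum]
    rw [← NNRat.cast_smul_eq_nnqsmul ℝ, NNRat.cast_inv, NNRat.cast_natCast]
  simp_rw [biasOperator, Complex.coe_smul, ← smul_sum, Fintype.balance_apply, sum_sub_distrib,
    hmean, smul_sub, sum_sub_distrib, ← sum_smul, hP, one_smul]

theorem successProb_sub_inv_card (hP : ∑ y, P y = 1)
    (hFsum : ∀ y, ∑ w ∈ R y, ∑ b, F y w b = 1) {ρ : V → Matrix S S ℂ}
    (hρ : ∑ x, (ρ x).trace = 1) :
    successProb P R g F ρ - (Fintype.card K : ℝ)⁻¹ =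
      ∑ x, (biasOperator P R g F x * ρ x).trace.re := by
  have hmean : ∑ x, ((Fintype.card K : ℝ)⁻¹ • ρ x).trace.re = (Fintype.card K : ℝ)⁻¹ := by
    simp_rw [trace_smul, Complex.smul_re, ← smul_sum, ← Complex.re_sum, hρ, Complex.one_re,
      smul_eq_mul, mul_one]
  simp_rw [biasOperator_eq_sub hP hFsum, Matrix.sub_mul, trace_sub, Complex.sub_re,
    sum_sub_distrib, Matrix.smul_mul, Matrix.one_mul, hmean, successProb, Matrix.sum_mul, trace_sum,
    Complex.re_sum, Matrix.smul_mul, trace_smul, Complex.smul_re, smul_eq_mul, Matrix.sum_mul,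
    trace_sum, Complex.re_sum]

theorem sum_re_trace_biasOperator_le [DecidableEq (Module.Dual K V)] {m : ℕ}
    (hg : ∀ φ, ∑ y, #{w ∈ R y | g y w = φ} ≤ m)
    (hF : ∀ y, ∀ w ∈ R y, ∀ b, (F y w b).PosSemidef)
    (hFsum : ∀ y, ∑ w ∈ R y, ∑ b, F y w b = 1) {σ : Matrix S S ℂ} (hσ : σ.PosSemidef) :
    ∑ x, (biasOperator P R g F x * σ * (biasOperator P R g F x)ᴴ).trace.re ≤
      m * Fintype.card V * ((∑ y, P y ^ 2) * σ.trace.re) := by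
  have hcount (φ : Module.Dual K V) : #{a ∈ univ.sigma R | g a.1 a.2 = φ} ≤ m := by
    simpa only [card_filter, sum_sigma] using hg φ
  have hPOVM (y : Y) : ∑ w ∈ R y, ∑ b, (F y w b * σ * (F y w b)ᴴ).trace.re ≤ σ.trace.re := by
    rw [← sum_product']
    exact sum_re_trace_mul_mul_conjTranspose_le
      (fun a ha => hF y a.1 (mem_product.mp ha).1 a.2) (by rw [sum_product', hFsum]) hσ
  calc ∑ x, (biasOperator P R g F x * σ * (biasOperator P R g F x)ᴴ).trace.re
      ≤ m * Fintype.card V *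
          ∑ y, P y ^ 2 * ∑ w ∈ R y, ∑ b, (F y w b * σ * (F y w b)ᴴ).trace.re := by
        let _ := σ.toMatrixSeminormedAddCommGroup hσ
        let _ := σ.toMatrixInnerProductSpace hσ
        simpa only [sum_sigma, norm_sq_eq_re_trace hσ, biasOperator, mul_sum, Complex.norm_real,
          Real.norm_eq_abs, sq_abs] using
          sum_norm_sq_sum_smul_balance_le ℂ hcount (fun a => (P a.1 : ℂ)) fun a => F a.1 a.2
    _ ≤ m * Fintype.card V * ∑ y, P y ^ 2 * σ.trace.re := by
        gcongr with y
        exact hPOVM y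
    _ = m * Fintype.card V * ((∑ y, P y ^ 2) * σ.trace.re) := by rw [sum_mul]

theorem guessing_game_bound_general [DecidableEq (Module.Dual K V)]
    {m : ℕ} (hg : ∀ φ, ∑ y, #{w ∈ R y | g y w = φ} ≤ m)
    {ρ : V → Matrix S S ℂ} (hρ : ∀ x, (ρ x).PosSemidef) (hρtr : ∑ x, (ρ x).trace = 1)
    {k' : ℝ} {σ : Matrix S S ℂ} (hσ : σ.PosSemidef) (hσtr : σ.trace = 1)
    (hmin' : ∀ x, Loewner (ρ x) ((2 ^ (-k') : ℝ) • σ))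
    (hP0 : ∀ y, 0 ≤ P y) (hP1 : ∑ y, P y = 1) {k : ℝ} (hPk : ∀ y, P y ≤ 2 ^ (-k))
    (hF : ∀ y, ∀ w ∈ R y, ∀ b, (F y w b).PosSemidef)
    (hFsum : ∀ y, ∑ w ∈ R y, ∑ b, F y w b = 1) :
    successProb P R g F ρ ≤
      (Fintype.card K : ℝ)⁻¹ + √(m * Fintype.card V * 2 ^ (-(k + k'))) := by
  set G := biasOperator P R g F
  have hcollision : ∑ y, P y ^ 2 ≤ 2 ^ (-k) := calc
    ∑ y, P y ^ 2 ≤ ∑ y, 2 ^ (-k) * P y := by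
      simp_rw [sq]
      exact sum_le_sum fun y _ => mul_le_mul_of_nonneg_right (hPk y) (hP0 y)
    _ = 2 ^ (-k) := by rw [← mul_sum, hP1, mul_one]
  have hsecond : ∑ x, (G x * ρ x * (G x)ᴴ).trace.re ≤ m * Fintype.card V * 2 ^ (-(k + k')) := calc
    ∑ x, (G x * ρ x * (G x)ᴴ).trace.re
      ≤ ∑ x, (G x * ((2 ^ (-k') : ℝ) • σ) * (G x)ᴴ).trace.re :=
        sum_le_sum fun x _ => (hmin' x).re_trace_mul_mul_conjTranspose_le (G x)
    _ = 2 ^ (-k') * ∑ x, (G x * σ * (G x)ᴴ).trace.re := by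
        simp only [Matrix.mul_smul, Matrix.smul_mul, trace_smul, Complex.smul_re, smul_eq_mul,
          mul_sum]
    _ ≤ 2 ^ (-k') * (m * Fintype.card V * ((∑ y, P y ^ 2) * σ.trace.re)) := by
        gcongr
        exact sum_re_trace_biasOperator_le hg hF hFsum hσ
    _ ≤ 2 ^ (-k') * (m * Fintype.card V * 2 ^ (-k)) := by
        rw [hσtr, Complex.one_re, mul_one]
        gcongr
    _ = m * Fintype.card V * 2 ^ (-(k + k')) := by
        rw [neg_add, Real.rpow_add two_pos]
        ring
  rw [← sub_le_iff_le_add', successProb_sub_inv_card hP1 hFsum hρtr]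
  calc ∑ x, (G x * ρ x).trace.re
      ≤ √(∑ x, (ρ x).trace.re) * √(∑ x, (G x * ρ x * (G x)ᴴ).trace.re) :=
        sum_re_trace_mul_le_sqrt_mul_sqrt hρ G
    _ = √(∑ x, (G x * ρ x * (G x)ᴴ).trace.re) := by
        rw [← Complex.re_sum, hρtr, Complex.one_re, Real.sqrt_one, one_mul]
    _ ≤ √(m * Fintype.card V * 2 ^ (-(k + k'))) := Real.sqrt_le_sqrt hsecond

end GuessingGame

/-- Guessing-game bound: if Bob, holding quantum side information `M` about `X` with
`H_min(X|M) ≥ k'` and an independent source `Y` with `H_min(Y) ≥ k`, outputs `y' ≠ y` and a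
guess `b` for `⟨x, g(y,y')⟩` via a POVM, then the success probability is at most
`1/p + √(2·p^{n+1}·2^{−(k+k')})`. -/
theorem guessing_game_bound
    (p : ℕ) [Fact p.Prime]
    (n : ℕ) (hn : Even n) (hnpos : 0 < n)
    (g : ((Fin (n / 2) → ZMod p) × (Fin (n / 2) → ZMod p)) → (Fin n → ZMod p))
    -- `g` is at most 2-to-1 on pairs with distinct coordinates
    (hg : ∀ z : Fin n → ZMod p,
      (univ.filter fun yy' : (Fin (n / 2) → ZMod p) × (Fin (n / 2) → ZMod p) =>
        yy'.1 ≠ yy'.2 ∧ g yy' = z).card ≤ 2)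
    {S_M : Type*} [Fintype S_M] [DecidableEq S_M]
    -- the c-q state `ρ_{XM}`
    (ρ : (Fin n → ZMod p) → Matrix S_M S_M ℂ)
    (hρ : ∀ x, (ρ x).PosSemidef)
    (hρtr : ∑ x, (ρ x).trace = 1)
    -- conditional min-entropy: `ρ^x ≤ 2^{-k'}·σ_M` for some state `σ_M`
    (k' : ℝ) (σM : Matrix S_M S_M ℂ)
    (hσM : σM.PosSemidef) (hσMtr : σM.trace = 1)
    (hmin' : ∀ x, Loewner (ρ x) ((2 ^ (-k') : ℝ) • σM))
    -- the distribution of `Y`, independent of `(X,M)`, with min-entropy at least `k`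
    (P_Y : (Fin (n / 2) → ZMod p) → ℝ)
    (hPY0 : ∀ y, 0 ≤ P_Y y) (hPY1 : ∑ y, P_Y y = 1)
    (k : ℝ) (hPYk : ∀ y, P_Y y ≤ 2 ^ (-k))
    -- for each `y`, a POVM with outcomes `(y', b)`, `y' ≠ y`
    (F : (Fin (n / 2) → ZMod p) → (Fin (n / 2) → ZMod p) → ZMod p → Matrix S_M S_M ℂ)
    (hFpsd : ∀ y y' b, (F y y' b).PosSemidef)
    (hFsum : ∀ y, ∑ y' ∈ univ.filter (fun y' => y' ≠ y), ∑ b, F y y' b = 1)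
    -- the success probability of the guessing game
    (Psucc : ℝ)
    (hPsucc : Psucc = ∑ x, ∑ y, P_Y y *
      ∑ y' ∈ univ.filter (fun y' => y' ≠ y),
        ((F y y' (∑ i, x i * g (y, y') i) * ρ x).trace).re) :
    Psucc ≤ (p : ℝ)⁻¹ + Real.sqrt (2 * (p : ℝ) ^ (n + 1) * 2 ^ (-(k + k'))) := by
  have hsucc : Psucc = successProb P_Y (fun y => univ.filter (· ≠ y))
      (fun y y' => dotProductEquiv (ZMod p) (Fin n) (g (y, y'))) F ρ := by
    simp only [hPsucc, successProb, dotProductEquiv_apply_apply, dotProduct, mul_comm]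
  have hg' (φ : Module.Dual (ZMod p) (Fin n → ZMod p)) :
      ∑ y, #{y' ∈ univ.filter (· ≠ y) |
        dotProductEquiv (ZMod p) (Fin n) (g (y, y')) = φ} ≤ 2 := by
    simpa only [card_filter, sum_filter, Fintype.sum_prod_type, ite_and,
      LinearEquiv.eq_symm_apply, ne_comm] using hg ((dotProductEquiv (ZMod p) (Fin n)).symm φ)
  calc Psucc
      ≤ (Fintype.card (ZMod p) : ℝ)⁻¹ +
          √((2 : ℕ) * Fintype.card (Fin n → ZMod p) * 2 ^ (-(k + k'))) :=
        hsucc ▸ guessing_game_bound_general hg' hρ hρtr hσM hσMtr hmin' hPY0 hPY1 hPYk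
          (fun y y' _ b => hFpsd y y' b) hFsum
    _ = (p : ℝ)⁻¹ + √(2 * p ^ n * 2 ^ (-(k + k'))) := by simp [ZMod.card]
    _ ≤ (p : ℝ)⁻¹ + √(2 * p ^ (n + 1) * 2 ^ (-(k + k'))) := by
        gcongr
        · exact mod_cast (Fact.out : p.Prime).one_le
        · exact n.le_succ
end

section
/- Local generation of a state with min-entropy via post-selection (Claim 1 of the paper): Let 𝒳 be a finite set and S_A, S_B finite types. Let φ = ∑_{x∈𝒳} e_x ⊗ e_x ⊗ v_x be a unit vector on ℂ^𝒳(register X) ⊗ ℂ^𝒳(register X') ⊗ ℂ^{S_A × S_B}, where v_x ∈ ℂ^{S_A × S_B} and ∑_x ‖v_x‖² = 1 (X is classical with copy X'). Suppose H_min(X|B)_φ ≥ k: there exists a state σ_B on ℂ^{S_B} such that for every x, the Gram matrix G^x_B defined by G^x_B(b,b') = ∑_{a∈S_A} v_x(a,b)·conj(v_x(a,b')) satisfies G^x_B ≤ 2^{−k}·σ_B in the Löwner order. Then there exist a finite type A₀, a unit vector s ∈ ℂ^{A₀ × S_B}, a complex number c with |c|² ≥ 2^k/|𝒳|, and a linear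 map K : ℂ^𝒳 ⊗ ℂ^{A₀} → ℂ^𝒳 ⊗ ℂ^{S_A} with K†K ≤ I, such that (I_{𝒳} ⊗ K ⊗ I_{S_B}) applied to the vector (1/√|𝒳|) ∑_{x} e_x(register X₁) ⊗ e_x(register X₂) ⊗ s equals c · φ̃, where φ̃ = ∑_x e_x(X₁) ⊗ e_x(X') ⊗ v_x is φ with its first register relabeled X₁, I_𝒳 acts on X₁, K acts on (X₂, A₀), and I_{S_B} acts on the S_B index of s. (Interpretation: sharing a maximally entangled state on X₁X₂ with the Reference and a pure state s with Bob, Alice can perform a local measurement succeeding with probability |c|² ≥ 2^{k−log₂|𝒳|} whose success branch produces exactly the state φ.) -/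
open scoped BigOperators ComplexOrder
open Matrix Finset

/-- The conclusion of Claim 1, for a given ancilla type `A₀`: there exist a pure state `s` shared
with Bob, a measurement contraction `K` on Alice's side, and an amplitude `c` with
`|c|² ≥ 2^k/|𝒳|`, such that applying `I ⊗ K ⊗ I` to the maximally entangled state on `X₁X₂`
tensored with `s` yields `c` times the target state `φ̃ = ∑_x e_x ⊗ e_x ⊗ v_x`. -/
def Claim1Conclusion (𝒳 S_A S_B : Type*) [Fintype 𝒳] [DecidableEq 𝒳]
    [Fintype S_A] [DecidableEq S_A] [Fintype S_B] [DecidableEq S_B]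
    (v : 𝒳 → S_A × S_B → ℂ) (k : ℝ)
    (A₀ : Type) [iF : Fintype A₀] [iD : DecidableEq A₀] : Prop :=
  ∃ (s : A₀ × S_B → ℂ) (c : ℂ) (K : Matrix (𝒳 × S_A) (𝒳 × A₀) ℂ),
    (∑ q, ‖s q‖ ^ 2 = 1) ∧
    (2 ^ k / (Fintype.card 𝒳 : ℝ) ≤ ‖c‖ ^ 2) ∧
    Loewner (Kᴴ * K) 1 ∧
    ∀ (x₁ x' : 𝒳) (a : S_A) (b : S_B),
      (Real.sqrt (Fintype.card 𝒳) : ℂ)⁻¹ * ∑ a₀, K (x', a) (x₁, a₀) * s (a₀, b) =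
        c * (if x₁ = x' then v x₁ (a, b) else 0)

/-!
Write `S` for the coefficient matrix of a pure state `s`. Its reduced state on the second register
is `(Sᴴ * S)ᵀ`, so a Löwner inequality between reduced states is an inequality `Aᴴ * A ≤ Bᴴ * B`
between Gram matrices, that is `‖A x‖ ≤ ‖B x‖` for all `x`. By Douglas' factorization lemma, `A` is
then `L * B` for a contraction `L`: Alice turns one state into the other by a local filter.

Take `s` purifying `σ_B`. The min-entropy bound says that the reduced state of `√(2 ^ k) • v x` is
at most that of `s`, so there is a filter `L x` from `s` to `√(2 ^ k) • v x`. Applying `L x`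
controlled on the basis state `x` of `X₂` produces `φ̃`, with amplitude `√(2 ^ k)` from the filters
and `1 / √|𝒳|` from the maximally entangled state.
-/

section Douglas

theorem exists_contraction_comp_eq {𝕜 E F H : Type*} [RCLike 𝕜] [AddCommGroup E] [Module 𝕜 E]
    [NormedAddCommGroup F] [InnerProductSpace 𝕜 F] [NormedAddCommGroup H] [Module 𝕜 H]
    (S : E →ₗ[𝕜] F) (T : E →ₗ[𝕜] H) [S.range.HasOrthogonalProjection]
    (hTS : ∀ x, ‖T x‖ ≤ ‖S x‖) :
    ∃ L : F →ₗ[𝕜] H, (∀ y, ‖L y‖ ≤ ‖y‖) ∧ L ∘ₗ S = T := by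
  obtain ⟨R, hR⟩ := S.rangeRestrict.exists_rightInverse_of_surjective S.range_rangeRestrict
  have hSR (y : S.range) : S (R y) = y := congr_arg Subtype.val (LinearMap.congr_fun hR y)
  let P : F →ₗ[𝕜] S.range := S.range.orthogonalProjectionOnto.toLinearMap
  refine ⟨T ∘ₗ R ∘ₗ P, fun y ↦ ?_, LinearMap.ext fun x ↦ ?_⟩
  · calc ‖T (R (P y))‖ ≤ ‖S (R (P y))‖ := hTS _
      _ = ‖P y‖ := by rw [hSR, Submodule.coe_norm]
      _ ≤ ‖y‖ := S.range.norm_orthogonalProjectionOnto_apply_le y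
  · have hPS : P (S x) = ⟨S x, S.mem_range_self x⟩ :=
      Submodule.orthogonalProjectionOnto_mem_subspace_eq_self ⟨S x, S.mem_range_self x⟩
    have hker : ‖T (R (P (S x)) - x)‖ ≤ 0 := by
      simpa [hSR, hPS] using hTS (R (P (S x)) - x)
    rwa [norm_le_zero_iff, map_sub, sub_eq_zero] at hker

variable {𝕜 m n p : Type*} [RCLike 𝕜] [Fintype m] [Fintype p]

theorem posSemidef_gram_sub_gram_iff [Fintype n] [DecidableEq n] (A : Matrix m n 𝕜)
    (B : Matrix p n 𝕜) :
    (Bᴴ * B - Aᴴ * A).PosSemidef ↔ ∀ x, ‖toEuclideanLin A x‖ ≤ ‖toEuclideanLin B x‖ := by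
  classical
  have hherm : (Bᴴ * B - Aᴴ * A).IsHermitian :=
    (isHermitian_conjTranspose_mul_self B).sub (isHermitian_conjTranspose_mul_self A)
  rw [← isPositive_toEuclideanLin_iff, LinearMap.IsPositive,
    and_iff_right (isSymmetric_toEuclideanLin_iff.mpr hherm)]
  refine forall_congr' fun x ↦ ?_
  rw [map_sub, toLpLin_mul (q := 2), toLpLin_mul (q := 2), toEuclideanLin_conjTranspose_eq_adjoint,
    toEuclideanLin_conjTranspose_eq_adjoint]
  simp only [LinearMap.sub_apply, LinearMap.comp_apply, inner_sub_left,
    LinearMap.adjoint_inner_left, map_sub, inner_self_eq_norm_sq, sub_nonneg]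
  exact sq_le_sq₀ (norm_nonneg _) (norm_nonneg _)

theorem exists_contraction_mul_eq [Finite n] [DecidableEq p] {A : Matrix m n 𝕜}
    {B : Matrix p n 𝕜} (hAB : (Bᴴ * B - Aᴴ * A).PosSemidef) :
    ∃ L : Matrix m p 𝕜, (1 - Lᴴ * L).PosSemidef ∧ L * B = A := by
  classical
  cases nonempty_fintype n
  obtain ⟨T, hT, hTB⟩ := exists_contraction_comp_eq (toEuclideanLin B) (toEuclideanLin A)
    ((posSemidef_gram_sub_gram_iff A B).mp hAB)
  refine ⟨toEuclideanLin.symm T, ?_, toEuclideanLin.injective ?_⟩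
  · have hgram := (posSemidef_gram_sub_gram_iff (toEuclideanLin.symm T) (1 : Matrix p p 𝕜)).mpr
      fun y ↦ by rw [LinearEquiv.apply_symm_apply, toLpLin_one]; exact hT y
    rwa [conjTranspose_one, one_mul] at hgram
  · rw [toLpLin_mul (q := 2), LinearEquiv.apply_symm_apply, hTB]

end Douglas

section Controlled

open scoped MatrixOrder in
theorem posSemidef_blockDiagonal {𝕜 o n : Type*} [RCLike 𝕜] [Finite o] [DecidableEq o] [Finite n]
    {B : o → Matrix n n 𝕜} (hB : ∀ x, (B x).PosSemidef) : (blockDiagonal B).PosSemidef := by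
  classical
  cases nonempty_fintype o
  cases nonempty_fintype n
  choose C hC using fun x ↦ CStarAlgebra.nonneg_iff_eq_star_mul_self.mp (hB x).nonneg
  simp only [star_eq_conjTranspose] at hC
  rw [funext hC, blockDiagonal_mul, ← blockDiagonal_conjTranspose]
  exact posSemidef_conjTranspose_mul_self _

variable {o m n : Type*} [DecidableEq o]

/-- The controlled operation `∑ x, |x⟩⟨x| ⊗ L x`. This is `Matrix.blockDiagonal`, whose index pairs
are swapped to put the control register first. -/
def controlled {α : Type*} [Zero α] (L : o → Matrix m n α) :
    Matrix (o × m) (o × n) α :=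
  (blockDiagonal L).submatrix (Equiv.prodComm o m) (Equiv.prodComm o n)

theorem controlled_apply {α : Type*} [Zero α] (L : o → Matrix m n α)
    (x y : o) (i : m) (j : n) : controlled L (x, i) (y, j) = if x = y then L x i j else 0 :=
  rfl

theorem loewner_controlled_one [Fintype o] [Fintype m] [Fintype n] [DecidableEq n]
    {L : o → Matrix m n ℂ} (hL : ∀ x, Loewner ((L x)ᴴ * L x) 1) :
    Loewner ((controlled L)ᴴ * controlled L) 1 := by
  have hblock : (1 - (blockDiagonal L)ᴴ * blockDiagonal L).PosSemidef := by
    rw [blockDiagonal_conjTranspose, ← blockDiagonal_mul, ← blockDiagonal_one, ← blockDiagonal_sub]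
    exact posSemidef_blockDiagonal hL
  rw [Loewner, controlled, conjTranspose_submatrix, submatrix_mul_equiv,
    ← submatrix_one_equiv (Equiv.prodComm o n)]
  exact hblock.submatrix _

end Controlled

section ReducedState

variable {A A' B : Type*} [Fintype A]

/-- The reduced state on `B` (partial trace over `A`) of the possibly unnormalized pure state `ψ`
on `ℂ^A ⊗ ℂ^B`. -/
def reducedState (ψ : A × B → ℂ) : Matrix B B ℂ :=
  fun b b' ↦ ∑ a, ψ (a, b) * (starRingEnd ℂ) (ψ (a, b'))

theorem reducedState_eq_transpose_gram (ψ : A × B → ℂ) :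
    reducedState ψ = ((of ψ.curry)ᴴ * of ψ.curry)ᵀ := by
  ext b b'
  simp [reducedState, mul_apply, mul_comm]

theorem reducedState_smul (c : ℂ) (ψ : A × B → ℂ) :
    reducedState (c • ψ) = (‖c‖ ^ 2 : ℝ) • reducedState ψ := by
  ext b b'
  simp only [reducedState, Pi.smul_apply, smul_eq_mul, map_mul, Matrix.smul_apply,
    Complex.real_smul, Finset.mul_sum, Complex.ofReal_pow, ← Complex.mul_conj']
  exact Finset.sum_congr rfl fun a _ ↦ by ring

theorem trace_reducedState [Fintype B] (ψ : A × B → ℂ) :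
    (reducedState ψ).trace = ((∑ q, ‖ψ q‖ ^ 2 : ℝ) : ℂ) := by
  simp [Matrix.trace, reducedState, Fintype.sum_prod_type_right, Complex.mul_conj']

open scoped MatrixOrder in
theorem exists_reducedState_eq [Finite B] (e : A ≃ B) {σ : Matrix B B ℂ}
    (hσ : σ.PosSemidef) : ∃ s : A × B → ℂ, reducedState s = σ := by
  classical
  cases nonempty_fintype B
  obtain ⟨C, hC⟩ := CStarAlgebra.nonneg_iff_eq_star_mul_self.mp hσ.transpose.nonneg
  refine ⟨fun q ↦ C (e q.1) q.2, ?_⟩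
  have hgram : (C.submatrix e id)ᴴ * C.submatrix e id = Cᴴ * C := by
    rw [conjTranspose_submatrix, submatrix_mul_equiv, submatrix_id_id]
  rw [reducedState_eq_transpose_gram, ← transpose_transpose σ, hC, star_eq_conjTranspose, ← hgram]
  rfl

theorem exists_local_filter [Fintype A'] [DecidableEq A] [Fintype B] {s : A × B → ℂ}
    {ψ : A' × B → ℂ} (hψ : Loewner (reducedState ψ) (reducedState s)) :
    ∃ L : Matrix A' A ℂ, Loewner (Lᴴ * L) 1 ∧ ∀ a b, ∑ a₀, L a a₀ * s (a₀, b) = ψ (a, b) := by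
  rw [Loewner, reducedState_eq_transpose_gram, reducedState_eq_transpose_gram, ← transpose_sub,
    posSemidef_transpose_iff] at hψ
  obtain ⟨L, hL, hLs⟩ := exists_contraction_mul_eq hψ
  exact ⟨L, hL, fun a b ↦ congr_fun₂ hLs a b⟩

end ReducedState

theorem local_generation_via_post_selection_general
    {𝒳 S_A S_B A₀ : Type*} [Fintype 𝒳] [DecidableEq 𝒳] [Fintype S_A] [Fintype S_B]
    [Fintype A₀] [DecidableEq A₀]
    (v : 𝒳 → S_A × S_B → ℂ) (k : ℝ) (s : A₀ × S_B → ℂ)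
    (hmin : ∀ x, Loewner (reducedState (v x)) ((2 ^ (-k) : ℝ) • reducedState s)) :
    ∃ K : Matrix (𝒳 × S_A) (𝒳 × A₀) ℂ, Loewner (Kᴴ * K) 1 ∧
      ∀ (x₁ x' : 𝒳) (a : S_A) (b : S_B),
        (√(Fintype.card 𝒳) : ℂ)⁻¹ * ∑ a₀, K (x', a) (x₁, a₀) * s (a₀, b) =
          √(2 ^ k / Fintype.card 𝒳) * (if x₁ = x' then v x₁ (a, b) else 0) := by
  have hnorm : ‖(√(2 ^ k) : ℂ)‖ ^ 2 = (2 : ℝ) ^ k := by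
    rw [Complex.norm_real, Real.norm_eq_abs, sq_abs, Real.sq_sqrt (by positivity)]
  have hscaled (x : 𝒳) :
      Loewner (reducedState ((√(2 ^ k) : ℂ) • v x)) (reducedState s) := by
    have hsmul := (hmin x).smul (show (0 : ℝ) ≤ 2 ^ k by positivity)
    rwa [smul_sub, smul_smul, ← Real.rpow_add two_pos, add_neg_cancel, Real.rpow_zero, one_smul,
      ← hnorm, ← reducedState_smul] at hsmul
  choose L hL hLs using fun x ↦ exists_local_filter (hscaled x)
  refine ⟨controlled L, loewner_controlled_one hL, fun x₁ x' a b ↦ ?_⟩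
  obtain rfl | hx := eq_or_ne x₁ x'
  · simp only [controlled_apply, if_true, hLs, Pi.smul_apply, smul_eq_mul]
    rw [Real.sqrt_div (by positivity)]
    push_cast
    ring
  · simp [controlled_apply, hx, hx.symm]

/-- Local generation of a state with conditional min-entropy via post-selection (Claim 1): if the
pure state `φ = ∑_x e_x ⊗ e_x ⊗ v_x` satisfies `H_min(X|B)_φ ≥ k`, then sharing a maximally
entangled state with the Reference and a suitable pure state with Bob, Alice can perform a local
measurement succeeding with probability at least `2^{k−log|𝒳|}` whose success branch produces
exactly `φ`. -/
theorem local_generation_via_post_selection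
    {𝒳 S_A S_B : Type*} [Fintype 𝒳] [DecidableEq 𝒳] [Nonempty 𝒳]
    [Fintype S_A] [DecidableEq S_A] [Fintype S_B] [DecidableEq S_B]
    (v : 𝒳 → S_A × S_B → ℂ)
    (hv : ∑ x, ∑ q, ‖v x q‖ ^ 2 = 1)
    -- the reduced blocks `G^x_B` of `φφᴴ` on registers `X, B`
    (G : 𝒳 → Matrix S_B S_B ℂ)
    (hG : G = fun x => fun b b' => ∑ a, v x (a, b) * (starRingEnd ℂ) (v x (a, b')))
    -- `H_min(X|B)_φ ≥ k`: a state `σ_B` with `G^x ≤ 2^{-k}·σ_B` for all `x`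
    (k : ℝ) (σB : Matrix S_B S_B ℂ)
    (hσB : σB.PosSemidef) (hσBtr : σB.trace = 1)
    (hmin : ∀ x, Loewner (G x) ((2 ^ (-k) : ℝ) • σB)) :
    ∃ (A₀ : Type) (iF : Fintype A₀) (iD : DecidableEq A₀),
      Claim1Conclusion 𝒳 S_A S_B v k A₀ (iF := iF) (iD := iD) := by
  subst hG
  obtain ⟨s, rfl⟩ := exists_reducedState_eq (Fintype.equivFin S_B).symm hσB
  obtain ⟨K, hK, hKs⟩ := local_generation_via_post_selection_general v k s hmin
  have hs : ∑ q, ‖s q‖ ^ 2 = 1 := by exact_mod_cast trace_reducedState s ▸ hσBtr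
  refine ⟨_, inferInstance, inferInstance, s, √(2 ^ k / Fintype.card 𝒳), K, hs, ?_, hK, hKs⟩
  rw [Complex.norm_real, Real.norm_eq_abs, sq_abs, Real.sq_sqrt (by positivity)]
end
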